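/- For every g ∈ D and every polynomial f with g + f ∈ ⟨𝓕⟩, one has g ≼_lex f, where ≼_lex is extended to polynomials as described (in particular g ∉ ⟨𝓕⟩). -/

import Mathlib

open MvPolynomial

/-- Monomials in the variables `σ`, represented by their exponent vectors. -/
abbrev Mon (σ : Type*) := σ →₀ ℕ

/-- A monomial order: a total order on monomials such that `1 ≼ t` for every monomial `t`
and `t ≼ u → t·v ≼ u·v` (written additively on exponent vectors). -/
structure MonOrd (σ : Type*) where
  le : Mon σ → Mon σ → Prop
  le_refl : ∀ t, le t t
  le_trans : ∀ t u v, le t u → le u v → le t v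
  le_antisymm : ∀ t u, le t u → le u t → t = u
  le_total : ∀ t u, le t u ∨ le u t
  zero_le : ∀ t, le 0 t
  add_le_add : ∀ t u v, le t u → le (t + v) (u + v)

/-- Strict version of a monomial order. -/
def MonOrd.lt {σ : Type*} (μ : MonOrd σ) (t u : Mon σ) : Prop := μ.le t u ∧ t ≠ u

/-- The extension of a monomial order (given by the relation `r` on monomials) to polynomials:
`g ≼ f` iff `g = f` or the greatest monomial on which `f` and `g` differ occurs in `f`.
(This is the closed form of the recursive definition: `g ≼ f` iff `g = f`, or
`HT g ≺ HT f`, or `HT g = HT f` and `g - HT g ≼ f - HT f`, with `0` the least polynomial.) -/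
def polyLe {σ : Type*} (r : Mon σ → Mon σ → Prop) (g f : MvPolynomial σ (ZMod 2)) : Prop :=
  g = f ∨ ∃ t, t ∈ f.support ∧ t ∉ g.support ∧
    ∀ u : Mon σ, ((u ∈ f.support ∧ u ∉ g.support) ∨ (u ∈ g.support ∧ u ∉ f.support)) → r u t

/-- Strict extension of a monomial order to polynomials. -/
def polyLt {σ : Type*} (r : Mon σ → Mon σ → Prop) (g f : MvPolynomial σ (ZMod 2)) : Prop :=
  polyLe r g f ∧ g ≠ f

/-- `S_F`: the set of non-residual polynomials with respect to `F` and the monomial order `r`,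
i.e. those `f` admitting a `g` with `f + g ∈ ⟨F⟩` and `g ≺ f`. -/
def SF {σ : Type*} (r : Mon σ → Mon σ → Prop) (F : Set (MvPolynomial σ (ZMod 2))) :
    Set (MvPolynomial σ (ZMod 2)) :=
  {f | ∃ g, f + g ∈ Ideal.span F ∧ polyLt r g f}

/-- `t` is the head monomial (`r`-greatest monomial) of the polynomial `f`. -/
def IsHT {σ : Type*} (r : Mon σ → Mon σ → Prop) (f : MvPolynomial σ (ZMod 2)) (t : Mon σ) :
    Prop :=
  t ∈ f.support ∧ ∀ u ∈ f.support, r u t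

/-- `HT(S)`: the set of head monomials (as polynomials) of the nonzero elements of `S`. -/
def HTset {σ : Type*} (r : Mon σ → Mon σ → Prop) (S : Set (MvPolynomial σ (ZMod 2))) :
    Set (MvPolynomial σ (ZMod 2)) :=
  {p | ∃ f ∈ S, f ≠ 0 ∧ ∃ t, IsHT r f t ∧ p = monomial t 1}

/-- The divisibility (componentwise) order `◁` on monomials. -/
def triMon {σ : Type*} (t u : Mon σ) : Prop := ∀ x, t x ≤ u x

/-- The order `◁` on polynomials: `p ◁ q` iff there is an injective map `φ` from the
monomials of `p` to the monomials of `q` with `t ◁ φ t` for each monomial `t` of `p`. -/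
def triPoly {σ : Type*} (p q : MvPolynomial σ (ZMod 2)) : Prop :=
  ∃ φ : Mon σ → Mon σ, Set.InjOn φ ↑p.support ∧ ∀ t ∈ p.support, φ t ∈ q.support ∧ triMon t (φ t)

/-- Upward closure with respect to `◁`. -/
def upClo {σ : Type*} (A : Set (MvPolynomial σ (ZMod 2))) : Set (MvPolynomial σ (ZMod 2)) :=
  {q | ∃ p ∈ A, triPoly p q}

/-- `Min_◁(A)`: the `◁`-minimal elements of `A`. -/
def minTri {σ : Type*} (A : Set (MvPolynomial σ (ZMod 2))) : Set (MvPolynomial σ (ZMod 2)) :=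
  {p | p ∈ A ∧ ∀ q ∈ A, triPoly q p → q = p}

/-- `G` is a Gröbner basis of the ideal `I` with respect to the monomial order `r`. -/
def IsGB {σ : Type*} (r : Mon σ → Mon σ → Prop) (G : Finset (MvPolynomial σ (ZMod 2)))
    (I : Ideal (MvPolynomial σ (ZMod 2))) : Prop :=
  (↑G : Set (MvPolynomial σ (ZMod 2))) ⊆ ↑I ∧
    Ideal.span (↑G : Set (MvPolynomial σ (ZMod 2))) = I ∧
    Ideal.span (HTset r (↑I : Set (MvPolynomial σ (ZMod 2)))) = Ideal.span (HTset r ↑G)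

/-- `G` is a reduced Gröbner basis of `I` with respect to `r`. -/
def IsReducedGB {σ : Type*} (r : Mon σ → Mon σ → Prop) (G : Finset (MvPolynomial σ (ZMod 2)))
    (I : Ideal (MvPolynomial σ (ZMod 2))) : Prop :=
  IsGB r G I ∧ ∀ f ∈ G, ¬ ∀ t ∈ f.support,
    (monomial t 1 : MvPolynomial σ (ZMod 2)) ∈
      Ideal.span (HTset r ((↑G : Set (MvPolynomial σ (ZMod 2))) \ {f}))

/-- The variable set `X`: the special variables `s, ℓ, c, c̄, b, b̄` together with, for each
`0 ≤ i ≤ n`, the variables `s_i, f_i, q_{ji}, c_{ji}, b_{ji}` (`1 ≤ j ≤ 4`, encoded by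
`j : Fin 4`) and their barred copies (`bar = true`). -/
inductive MVar (n : ℕ) : Type where
  | vs | vl | vc | vcb | vb | vbb
  | vS (bar : Bool) (i : Fin (n+1))
  | vF (bar : Bool) (i : Fin (n+1))
  | vQ (bar : Bool) (j : Fin 4) (i : Fin (n+1))
  | vC (bar : Bool) (j : Fin 4) (i : Fin (n+1))
  | vB (bar : Bool) (j : Fin 4) (i : Fin (n+1))
deriving DecidableEq

open MVar

abbrev MPoly (n : ℕ) := MvPolynomial (MVar n) (ZMod 2)

/-- `e(n) = 2^(2^n)`. -/
def en (n : ℕ) : ℕ := 2 ^ 2 ^ n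

/-- The set `P_0` (barred copy if `bar = true`). -/
def P0 (n : ℕ) (bar : Bool) : Set (MPoly n) :=
  {p | ∃ j : Fin 4, p =
    X (vB bar j 0) ^ 2 * X (vC bar j 0) * X (vF bar 0) + X (vC bar j 0) * X (vS bar 0)}

/-- The set `P_m` for `m = i+1`, `i : Fin n` (barred copy if `bar = true`).
Here `i.succ` plays the role of `m` and `i.castSucc` the role of `m-1`; the indices
`1,2,3,4` of the paper are encoded as `0,1,2,3 : Fin 4`. -/
def Pm (n : ℕ) (bar : Bool) (i : Fin n) : Set (MPoly n) :=
  ({ X (vQ bar 0 i.succ) * X (vC bar 0 i.castSucc) * X (vS bar i.castSucc) + X (vS bar i.succ),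
    X (vQ bar 1 i.succ) * X (vC bar 1 i.castSucc) * X (vS bar i.castSucc)
      + X (vQ bar 0 i.succ) * X (vB bar 0 i.castSucc) * X (vC bar 0 i.castSucc)
        * X (vF bar i.castSucc),
    X (vQ bar 2 i.succ) * X (vC bar 2 i.castSucc) * X (vF bar i.castSucc)
      + X (vQ bar 1 i.succ) * X (vC bar 1 i.castSucc) * X (vF bar i.castSucc),
    X (vQ bar 2 i.succ) * X (vB bar 0 i.castSucc) * X (vC bar 2 i.castSucc)
        * X (vS bar i.castSucc)
      + X (vQ bar 1 i.succ) * X (vB bar 3 i.castSucc) * X (vC bar 1 i.castSucc)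
        * X (vS bar i.castSucc),
    X (vQ bar 3 i.succ) * X (vB bar 3 i.castSucc) * X (vC bar 3 i.castSucc)
        * X (vF bar i.castSucc)
      + X (vQ bar 2 i.succ) * X (vC bar 2 i.castSucc) * X (vS bar i.castSucc),
    X (vQ bar 3 i.succ) * X (vC bar 3 i.castSucc) * X (vS bar i.castSucc)
      + X (vF bar i.succ) } : Set (MPoly n))
  ∪ {p | ∃ j : Fin 4, p =
      X (vQ bar 1 i.succ) * X (vB bar 2 i.castSucc) * X (vB bar j i.succ) * X (vC bar j i.succ)
          * X (vF bar i.castSucc)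
        + X (vQ bar 1 i.succ) * X (vB bar 1 i.castSucc) * X (vC bar j i.succ)
          * X (vF bar i.castSucc)}

/-- The set `P = P_0 ∪ P_1 ∪ ⋯ ∪ P_n`; for `bar = true` this is the barred copy `P̄`
(the image of `P` under the substitution replacing each variable by its barred version). -/
def PP (n : ℕ) (bar : Bool) : Set (MPoly n) := P0 n bar ∪ ⋃ i : Fin n, Pm n bar i

/-- The set `G` of seven extra binomials. -/
def GG (n : ℕ) : Set (MPoly n) :=
  { X (vB false 3 (Fin.last n)) * X vl * X vb + X vl * X vc,
    X (vB false 3 (Fin.last n)) * X vl * X vbb + X vl * X vcb,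
    X (vC false 3 (Fin.last n)) * X (vF false (Fin.last n)) + X vl,
    X (vC true 3 (Fin.last n)) * X (vF true (Fin.last n))
      + X (vC false 3 (Fin.last n)) * X (vS false (Fin.last n)),
    X (vB true 3 (Fin.last n)) * X (vC false 3 (Fin.last n)) * X (vS false (Fin.last n))
      + X (vC false 3 (Fin.last n)) * X (vS false (Fin.last n)) * X vb,
    X (vB true 3 (Fin.last n)) * X (vC false 3 (Fin.last n)) * X (vS false (Fin.last n))
      + X (vC false 3 (Fin.last n)) * X (vS false (Fin.last n)) * X vbb,
    X (vC true 3 (Fin.last n)) * X (vS true (Fin.last n)) + X vs }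

/-- The set `𝓕 = P ∪ P̄ ∪ G`. -/
def FF (n : ℕ) : Set (MPoly n) := PP n false ∪ PP n true ∪ GG n

/-- The set `C = {ℓ c̄^{m1} c^{m2} : m1 + m2 = e(n)}` of monomials. -/
def Cmon (n : ℕ) : Set (Mon (MVar n)) :=
  {α | ∃ m1 m2 : ℕ, m1 + m2 = en n ∧
    α = Finsupp.single vl 1 + Finsupp.single vcb m1 + Finsupp.single vc m2}

/-- The set `D = {ℓ^j c̄^{m1} c^{m2} : j ∈ {0,1}, j + m1 + m2 ≤ e(n)}` of monomials. -/
def Dmon (n : ℕ) : Set (Mon (MVar n)) :=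
  {α | ∃ j m1 m2 : ℕ, j ≤ 1 ∧ j + m1 + m2 ≤ en n ∧
    α = Finsupp.single vl j + Finsupp.single vcb m1 + Finsupp.single vc m2}

/-- An injective rank function on the variables realizing the variable ordering
(from least to greatest): `s, c, c̄, ℓ, b, b̄`; then `s_0,…,s_n`; `f_0,…,f_n`;
`c_{10},…,c_{1n}; …; c_{40},…,c_{4n}`; `b_{10},…,b_{4n}`; `q_{10},…,q_{4n}`;
then the barred variables in the same pattern. -/
def vrank (n : ℕ) : MVar n → ℕ
  | .vs => 0
  | .vc => 1
  | .vcb => 2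
  | .vl => 3
  | .vb => 4
  | .vbb => 5
  | .vS bar i => 6 + (cond bar (14 * (n+1)) 0) + (i : ℕ)
  | .vF bar i => 6 + (cond bar (14 * (n+1)) 0) + (n+1) + (i : ℕ)
  | .vC bar j i => 6 + (cond bar (14 * (n+1)) 0) + 2*(n+1) + (j : ℕ)*(n+1) + (i : ℕ)
  | .vB bar j i => 6 + (cond bar (14 * (n+1)) 0) + 6*(n+1) + (j : ℕ)*(n+1) + (i : ℕ)
  | .vQ bar j i => 6 + (cond bar (14 * (n+1)) 0) + 10*(n+1) + (j : ℕ)*(n+1) + (i : ℕ)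

/-- The lexicographic monomial order on `X`: `t ≼_lex u` iff `t = u` or the exponents differ
somewhere and at the greatest variable (w.r.t. `vrank`) where they differ, the exponent of
`t` is smaller. -/
def lexLe (n : ℕ) (t u : Mon (MVar n)) : Prop :=
  t = u ∨ ∃ x : MVar n, t x < u x ∧ ∀ y : MVar n, vrank n x < vrank n y → t y = u y

/-- The total degree of a monomial. -/
def mdeg {σ : Type*} (t : Mon σ) : ℕ := t.sum fun _ k => k

/-- The degree lexicographic monomial order. -/
def degLexLe (n : ℕ) (t u : Mon (MVar n)) : Prop :=
  mdeg t < mdeg u ∨ (mdeg t = mdeg u ∧ lexLe n t u)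

/-- Weighted degree of a monomial with respect to a weight map `w`. -/
noncomputable def wdeg {n : ℕ} (w : MVar n → ℝ) (t : Mon (MVar n)) : ℝ :=
  t.sum fun x k => (k : ℝ) * w x

/-- The weighted monomial order determined by the weight map `w`. -/
def wLe {n : ℕ} (w : MVar n → ℝ) (t u : Mon (MVar n)) : Prop := t = u ∨ wdeg w t < wdeg w u

/-!
Over `ℤ₂` the binomials `t + u = t - u` of `𝓕` are reversible rewriting rules `t ↔ u` on monomials.
If a set `W` of monomials is closed under these rules, then the sum of the coefficients at the
monomials of `W` vanishes on `⟨𝓕⟩`. Hence, if `g` is lex-minimal in `W`, the greatest monomial of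
`g + f ∈ ⟨𝓕⟩` is not `g`, for otherwise `g` would be the only monomial of `W` in `g + f`; so it
belongs to `f` but not to `g`, which is `g ≼ f`. It remains to find such a `W` for every `g ∈ D`.

No rule applies to `c̄ ^ m₁ * c ^ m₂`, so a singleton will do. For `ℓ * c̄ ^ m₁ * c ^ m₂` with
`m₁ + m₂ < e(n)`, the rules with `ℓ` exchange any of the factors `c`, `c̄` for `b`, `b̄` together
with a factor `b_{4n}`, and `ℓ` itself for `c_{4n} f_n`. From there on, the rules of `P` are those
of the Mayr–Meyer counter machine, whose run of level `m` leads from `s_m c_{jm}` to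
`f_m c_{jm} b_{jm} ^ e(m)`, and which is run backwards here. In each of its configurations the
counters of level `m` at the end of the current run can be read off, and the rules do not change
them. As fewer than `e(n)` factors `b_{4n}` are available, the machine never gets back to `s_n`, so
none of the other rules ever applies. Finally `b`, `b̄` and `c_{4n}` are greater than `ℓ`, `c̄` and
`c`, so that `ℓ * c̄ ^ m₁ * c ^ m₂` is lex-minimal among the monomials reached.
-/

section BinomialIdeals

variable {σ R : Type*} [CommRing R]

/-- The sum of the coefficients of a polynomial at the monomials of `W`. -/
noncomputable def classSum (W : Set (Mon σ)) : MvPolynomial σ R →ₗ[R] R :=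
  (basisMonomials σ R).constr R (W.indicator 1)

/-- `F` consists of pure binomials `t - u`, and `W` is a union of classes of the congruence on
monomials which they generate. -/
def Saturated (F : Set (MvPolynomial σ R)) (W : Set (Mon σ)) : Prop :=
  ∀ p ∈ F, ∃ t u, p = monomial t 1 - monomial u 1 ∧ ∀ r, r + t ∈ W ↔ r + u ∈ W

theorem classSum_monomial (W : Set (Mon σ)) (t : Mon σ) (c : R) :
    classSum W (monomial t c) = c * W.indicator 1 t := by
  have h : classSum W (monomial t (1 : R)) = W.indicator 1 t := by
    simpa only [classSum, coe_basisMonomials] using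
      (basisMonomials σ R).constr_basis R (W.indicator 1) t
  rw [← mul_one c, ← smul_eq_mul, ← smul_monomial, map_smul, h, smul_eq_mul, smul_eq_mul, mul_one]

theorem Saturated.classSum_eq_zero {F : Set (MvPolynomial σ R)} {W : Set (Mon σ)}
    (hW : Saturated F W) {p : MvPolynomial σ R} (hp : p ∈ Ideal.span F) : classSum W p = 0 := by
  suffices h : ∀ q, classSum W (q * p) = 0 by simpa only [one_mul] using h 1
  induction hp using Submodule.span_induction with
  | mem p hp =>
    obtain ⟨t, u, rfl, htu⟩ := hW p hp
    intro q
    induction q using MvPolynomial.induction_on' with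
    | monomial r c =>
      have hind : W.indicator (1 : Mon σ → R) (r + t) = W.indicator 1 (r + u) := by
        classical simp only [Set.indicator_apply, htu r, Pi.one_apply]
      rw [mul_sub, monomial_mul, monomial_mul, map_sub, classSum_monomial, classSum_monomial, hind,
        sub_self]
    | add q₁ q₂ h₁ h₂ => rw [add_mul, map_add, h₁, h₂, add_zero]
  | zero => simp only [mul_zero, map_zero, implies_true]
  | add p₁ p₂ _ _ h₁ h₂ => intro q; rw [mul_add, map_add, h₁, h₂, add_zero]
  | smul a p _ h => intro q; rw [smul_eq_mul, ← mul_assoc, h]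

theorem Saturated.polyLe_monomial {F : Set (MvPolynomial σ (ZMod 2))} {W : Set (Mon σ)}
    (hW : Saturated F W) {r : Mon σ → Mon σ → Prop}
    (hr : ∀ s : Finset (Mon σ), s.Nonempty → ∃ t ∈ s, ∀ u ∈ s, r u t)
    {g : Mon σ} (hg : g ∈ W) (hmin : ∀ u ∈ W, r u g → u = g) {f : MvPolynomial σ (ZMod 2)}
    (hf : monomial g 1 + f ∈ Ideal.span F) : polyLe r (monomial g 1) f := by
  classical
  rcases eq_or_ne (monomial g 1 + f) 0 with h0 | h0
  · exact .inl ((CharTwo.add_eq_zero (R := MvPolynomial σ (ZMod 2))).1 h0)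
  obtain ⟨t, ht, hmax⟩ := hr _ (support_nonempty.2 h0)
  have hdiff (u : Mon σ) : u ∈ (monomial g 1 + f).support ↔
      u ∈ f.support ∧ u ∉ (monomial g (1 : ZMod 2)).support ∨
        u ∈ (monomial g (1 : ZMod 2)).support ∧ u ∉ f.support := by
    have hbit : ∀ a b : ZMod 2, a + b ≠ 0 ↔ b ≠ 0 ∧ ¬ a ≠ 0 ∨ a ≠ 0 ∧ ¬ b ≠ 0 := by decide
    simpa only [mem_support_iff, coeff_add] using hbit _ _
  have htg : t ≠ g := by
    rintro rfl
    have hsum := hW.classSum_eq_zero hf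
    rw [as_sum (monomial t 1 + f), map_sum, Finset.sum_eq_single_of_mem t ht, classSum_monomial,
      Set.indicator_of_mem hg, Pi.one_apply, mul_one] at hsum
    · exact mem_support_iff.1 ht hsum
    · intro u hu hut
      rw [classSum_monomial, Set.indicator_of_notMem, mul_zero]
      exact fun huW => hut (hmin u huW (hmax u hu))
  have htg' : t ∉ (monomial g (1 : ZMod 2)).support := fun h =>
    htg (Finset.mem_singleton.1 (support_monomial_subset h))
  have htf : t ∈ f.support := ((hdiff t).1 ht).elim And.left fun h => absurd h.1 htg'
  exact .inr ⟨t, htf, htg', fun u hu => hmax u ((hdiff u).2 hu)⟩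

end BinomialIdeals

section VariableOrder

/-- The position of a level variable among the consecutive blocks of `n + 1` variables that follow
the six special variables in the variable ordering (junk value `0` for the special variables). -/
def MVar.block {n : ℕ} : MVar n → ℕ
  | vS bar _ => 14 * bar.toNat
  | vF bar _ => 14 * bar.toNat + 1
  | vC bar j _ => 14 * bar.toNat + 2 + j
  | vB bar j _ => 14 * bar.toNat + 6 + j
  | vQ bar j _ => 14 * bar.toNat + 10 + j
  | _ => 0

theorem mul_add_inj_of_lt {N a b i j : ℕ} (hi : i < N) (hj : j < N)
    (h : N * a + i = N * b + j) : a = b ∧ i = j := by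
  have hab : a = b := by
    simpa [Nat.mul_add_div (Nat.zero_lt_of_lt hi), Nat.div_eq_of_lt hi, Nat.div_eq_of_lt hj]
      using congrArg (· / N) h
  subst hab
  exact ⟨rfl, Nat.add_left_cancel h⟩

theorem vrank_injective (n : ℕ) : Function.Injective (vrank n) := by
  have hlevel {x y : MVar n} {i j : Fin (n + 1)} (h : vrank n x = vrank n y)
      (hx : vrank n x = 6 + ((n + 1) * x.block + i))
      (hy : vrank n y = 6 + ((n + 1) * y.block + j)) : x.block = y.block ∧ i = j := by
    rw [hx, hy] at h
    obtain ⟨hblock, hij⟩ := mul_add_inj_of_lt i.2 j.2 (Nat.add_left_cancel h)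
    exact ⟨hblock, Fin.ext hij⟩
  intro x y h
  rcases x with _ | _ | _ | _ | _ | _ | ⟨bar, i⟩ | ⟨bar, i⟩ | ⟨bar, j, i⟩ | ⟨bar, j, i⟩ |
    ⟨bar, j, i⟩ <;>
  rcases y with _ | _ | _ | _ | _ | _ | ⟨bar', i'⟩ | ⟨bar', i'⟩ | ⟨bar', j', i'⟩ | ⟨bar', j', i'⟩ |
    ⟨bar', j', i'⟩ <;>
  first
  | rfl
  | simp only [vrank] at h; omega
  | obtain ⟨hblock, rfl⟩ := hlevel (i := i) (j := i') h
      (by cases bar <;> simp only [vrank, MVar.block, cond, Bool.toNat] <;> ring)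
      (by cases bar' <;> simp only [vrank, MVar.block, cond, Bool.toNat] <;> ring)
    cases bar <;> cases bar' <;> grind [MVar.block]

theorem exists_lexLe_max {n : ℕ} (s : Finset (Mon (MVar n))) (hs : s.Nonempty) :
    ∃ t ∈ s, ∀ u ∈ s, lexLe n u t := by
  let _ : LinearOrder (MVar n) :=
    LinearOrder.lift' (OrderDual.toDual ∘ vrank n)
      (OrderDual.toDual.injective.comp (vrank_injective n))
  obtain ⟨t, ht, hmax⟩ := s.exists_max_image toLex hs
  refine ⟨t, ht, fun u hu => (hmax u hu).eq_or_lt.imp toLex_inj.1 ?_⟩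
  rintro ⟨x, hx, hlt⟩
  exact ⟨x, hlt, fun y hy => hx y hy⟩

end VariableOrder

/-- The exponent vector of a single variable. -/
local notation:max "δ" x:max => Finsupp.single x (1 : ℕ)

section Rules

variable {n : ℕ} {bar : Bool} {k : Fin (n + 1)} {t u : Mon (MVar n)}

/-- `CounterRule bar k t u` says that `t + u` is one of the binomials of `P` (of `P̄` if
`bar = true`), where the exponent vectors `t` and `u` are read as configurations of a counter
machine and the binomial as a rewriting rule between them; `k` is the higher of the two levels
involved, i.e. the binomial lies in `P_k`. -/
inductive CounterRule (bar : Bool) : Fin (n + 1) → Mon (MVar n) → Mon (MVar n) → Prop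
  | base (j : Fin 4) : CounterRule bar 0
      (2 • δ (vB bar j 0) + δ (vC bar j 0) + δ (vF bar 0)) (δ (vC bar j 0) + δ (vS bar 0))
  | start (k : Fin n) : CounterRule bar k.succ
      (δ (vQ bar 0 k.succ) + δ (vC bar 0 k.castSucc) + δ (vS bar k.castSucc)) (δ (vS bar k.succ))
  | fork (k : Fin n) : CounterRule bar k.succ
      (δ (vQ bar 1 k.succ) + δ (vC bar 1 k.castSucc) + δ (vS bar k.castSucc))
      (δ (vQ bar 0 k.succ) + δ (vB bar 0 k.castSucc) + δ (vC bar 0 k.castSucc)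
        + δ (vF bar k.castSucc))
  | switch (k : Fin n) : CounterRule bar k.succ
      (δ (vQ bar 2 k.succ) + δ (vC bar 2 k.castSucc) + δ (vF bar k.castSucc))
      (δ (vQ bar 1 k.succ) + δ (vC bar 1 k.castSucc) + δ (vF bar k.castSucc))
  | loop (k : Fin n) : CounterRule bar k.succ
      (δ (vQ bar 2 k.succ) + δ (vB bar 0 k.castSucc) + δ (vC bar 2 k.castSucc)
        + δ (vS bar k.castSucc))
      (δ (vQ bar 1 k.succ) + δ (vB bar 3 k.castSucc) + δ (vC bar 1 k.castSucc)
        + δ (vS bar k.castSucc))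
  | join (k : Fin n) : CounterRule bar k.succ
      (δ (vQ bar 3 k.succ) + δ (vB bar 3 k.castSucc) + δ (vC bar 3 k.castSucc)
        + δ (vF bar k.castSucc))
      (δ (vQ bar 2 k.succ) + δ (vC bar 2 k.castSucc) + δ (vS bar k.castSucc))
  | finish (k : Fin n) : CounterRule bar k.succ
      (δ (vQ bar 3 k.succ) + δ (vC bar 3 k.castSucc) + δ (vS bar k.castSucc)) (δ (vF bar k.succ))
  | count (k : Fin n) (j : Fin 4) : CounterRule bar k.succ
      (δ (vQ bar 1 k.succ) + δ (vB bar 2 k.castSucc) + δ (vB bar j k.succ) + δ (vC bar j k.succ)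
        + δ (vF bar k.castSucc))
      (δ (vQ bar 1 k.succ) + δ (vB bar 1 k.castSucc) + δ (vC bar j k.succ) + δ (vF bar k.castSucc))

/-- `LinkRule t u` says that `t + u` is one of the seven binomials of `G`. -/
inductive LinkRule : Mon (MVar n) → Mon (MVar n) → Prop
  | unload_c : LinkRule (δ (vB false 3 (Fin.last n)) + δ vl + δ vb) (δ vl + δ vc)
  | unload_cb : LinkRule (δ (vB false 3 (Fin.last n)) + δ vl + δ vbb) (δ vl + δ vcb)
  | finish : LinkRule (δ (vC false 3 (Fin.last n)) + δ (vF false (Fin.last n))) (δ vl)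
  | handover : LinkRule (δ (vC true 3 (Fin.last n)) + δ (vF true (Fin.last n)))
      (δ (vC false 3 (Fin.last n)) + δ (vS false (Fin.last n)))
  | load_b : LinkRule
      (δ (vB true 3 (Fin.last n)) + δ (vC false 3 (Fin.last n)) + δ (vS false (Fin.last n)))
      (δ (vC false 3 (Fin.last n)) + δ (vS false (Fin.last n)) + δ vb)
  | load_bb : LinkRule
      (δ (vB true 3 (Fin.last n)) + δ (vC false 3 (Fin.last n)) + δ (vS false (Fin.last n)))
      (δ (vC false 3 (Fin.last n)) + δ (vS false (Fin.last n)) + δ vbb)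
  | start : LinkRule (δ (vC true 3 (Fin.last n)) + δ (vS true (Fin.last n))) (δ vs)

theorem exists_counterRule_of_mem_PP {p : MPoly n} (hp : p ∈ PP n bar) :
    ∃ k t u, CounterRule bar k t u ∧ p = monomial t 1 - monomial u 1 := by
  rcases hp with ⟨j, rfl⟩ | hp
  · exact ⟨_, _, _, .base j, by simp [X, monomial_mul, monomial_pow, CharTwo.sub_eq_add]⟩
  obtain ⟨k, (rfl | rfl | rfl | rfl | rfl | rfl) | ⟨j, rfl⟩⟩ := Set.mem_iUnion.1 hp
  · exact ⟨_, _, _, .start k, by simp [X, monomial_mul, CharTwo.sub_eq_add]⟩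
  · exact ⟨_, _, _, .fork k, by simp [X, monomial_mul, CharTwo.sub_eq_add]⟩
  · exact ⟨_, _, _, .switch k, by simp [X, monomial_mul, CharTwo.sub_eq_add]⟩
  · exact ⟨_, _, _, .loop k, by simp [X, monomial_mul, CharTwo.sub_eq_add]⟩
  · exact ⟨_, _, _, .join k, by simp [X, monomial_mul, CharTwo.sub_eq_add]⟩
  · exact ⟨_, _, _, .finish k, by simp [X, monomial_mul, CharTwo.sub_eq_add]⟩
  · exact ⟨_, _, _, .count k j, by simp [X, monomial_mul, CharTwo.sub_eq_add]⟩

theorem exists_linkRule_of_mem_GG {p : MPoly n} (hp : p ∈ GG n) :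
    ∃ t u, LinkRule t u ∧ p = monomial t 1 - monomial u 1 := by
  rcases hp with rfl | rfl | rfl | rfl | rfl | rfl | rfl
  · exact ⟨_, _, .unload_c, by simp [X, monomial_mul, CharTwo.sub_eq_add]⟩
  · exact ⟨_, _, .unload_cb, by simp [X, monomial_mul, CharTwo.sub_eq_add]⟩
  · exact ⟨_, _, .finish, by simp [X, monomial_mul, CharTwo.sub_eq_add]⟩
  · exact ⟨_, _, .handover, by simp [X, monomial_mul, CharTwo.sub_eq_add]⟩
  · exact ⟨_, _, .load_b, by simp [X, monomial_mul, CharTwo.sub_eq_add]⟩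
  · exact ⟨_, _, .load_bb, by simp [X, monomial_mul, CharTwo.sub_eq_add]⟩
  · exact ⟨_, _, .start, by simp [X, monomial_mul, CharTwo.sub_eq_add]⟩

theorem saturated_FF {W : Set (Mon (MVar n))}
    (hcounter : ∀ ⦃bar k t u⦄, CounterRule bar k t u → ∀ r, r + t ∈ W ↔ r + u ∈ W)
    (hlink : ∀ ⦃t u⦄, LinkRule t u → ∀ r, r + t ∈ W ↔ r + u ∈ W) : Saturated (FF n) W := by
  rintro p ((hp | hp) | hp)
  · obtain ⟨k, t, u, htu, rfl⟩ := exists_counterRule_of_mem_PP hp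
    exact ⟨t, u, rfl, hcounter htu⟩
  · obtain ⟨k, t, u, htu, rfl⟩ := exists_counterRule_of_mem_PP hp
    exact ⟨t, u, rfl, hcounter htu⟩
  · obtain ⟨t, u, htu, rfl⟩ := exists_linkRule_of_mem_GG hp
    exact ⟨t, u, rfl, hlink htu⟩

/-- The level `i` of an unbarred variable `s_i`, `f_i`, `q_{ji}`, `c_{ji}`, `b_{ji}`. The special
and the barred variables get the level `n + 1`, above all levels of the unbarred machine. -/
def MVar.level : MVar n → ℕ
  | vS bar i | vF bar i | vQ bar _ i | vC bar _ i | vB bar _ i => cond bar (n + 1) i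
  | _ => n + 1

/-- Some state variable `s_i` or `f_i` with `i ≤ k` (barred if `bar = true`) occurs in `τ`. -/
def Active (bar : Bool) (τ : Mon (MVar n)) (k : Fin (n + 1)) : Prop :=
  ∃ i ≤ k, τ (vS bar i) ≠ 0 ∨ τ (vF bar i) ≠ 0

theorem Active.mono {τ : Mon (MVar n)} {k l : Fin (n + 1)} (h : Active bar τ k) (hkl : k ≤ l) :
    Active bar τ l := by
  obtain ⟨i, hi, hτ⟩ := h
  exact ⟨i, hi.trans hkl, hτ⟩

theorem Active.add_left (h : Active bar t k) (r : Mon (MVar n)) : Active bar (r + t) k := by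
  obtain ⟨i, hi, ht⟩ := h
  refine ⟨i, hi, ht.imp ?_ ?_⟩ <;> intro h <;> rw [Finsupp.add_apply] <;> lia

theorem CounterRule.active (h : CounterRule bar k t u) : Active bar t k ∧ Active bar u k := by
  cases h with
  | base j => exact ⟨⟨0, le_rfl, by simp⟩, ⟨0, le_rfl, by simp⟩⟩
  | start k => exact ⟨⟨k.castSucc, k.castSucc_le_succ, by simp⟩, ⟨k.succ, le_rfl, by simp⟩⟩
  | finish k => exact ⟨⟨k.castSucc, k.castSucc_le_succ, by simp⟩, ⟨k.succ, le_rfl, by simp⟩⟩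
  | _ k =>
    exact ⟨⟨k.castSucc, k.castSucc_le_succ, by simp⟩, ⟨k.castSucc, k.castSucc_le_succ, by simp⟩⟩

theorem CounterRule.eq_zero_of_lt_level (h : CounterRule false k t u) {x : MVar n}
    (hx : (k : ℕ) < x.level) : t x = 0 ∧ u x = 0 := by
  have hδ {y : MVar n} (hy : y.level ≤ k) : δ y x = 0 :=
    Finsupp.single_eq_of_ne (by rintro rfl; lia)
  cases h <;> simp only [Finsupp.add_apply, Finsupp.smul_apply, add_eq_zero, smul_eq_zero,
    OfNat.ofNat_ne_zero, false_or] <;> and_intros <;> exact hδ (by simp [MVar.level])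

end Rules

section Machine

variable {n : ℕ} {r τ : Mon (MVar n)} {S : Set (MVar n)} {x y σ : MVar n} {i j : Fin 4}
  {β : Fin 4 → ℕ} {a b : ℕ}

/-- The variables of the unbarred machine of level at most `k`, except for the counters `b_{jk}` of
the top level. -/
def controlVars (k : Fin (n + 1)) : Set (MVar n) := {x | x.level ≤ k ∧ ∀ j, x ≠ vB false j k}

/-- The variables of level exactly `k` of the unbarred machine, except for the counters `b_{jk}`. -/
def layerVars (k : Fin (n + 1)) : Set (MVar n) := {x | x.level = k ∧ ∀ j, x ≠ vB false j k}

/-- The contents of the four counters `b_{jk}` of level `k` in the configuration `τ`. -/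
def counters (τ : Mon (MVar n)) (k : Fin (n + 1)) : Fin 4 → ℕ := fun j => τ (vB false j k)

/-- In state `σ`, either the initial state `s_k` or the final state `f_k`, a run of the machine of
level `k` has yet to add `a` to its counter. -/
inductive Pending (k : Fin (n + 1)) : MVar n → ℕ → Prop
  | start : Pending k (vS false k) (en k)
  | final : Pending k (vF false k) 0

/-- The machine of level `k` works for counter `j`, no lower level is active, and it has either not
yet started or finished; `β` records the counters of level `k` as they are when it has finished. -/
def Settled (τ : Mon (MVar n)) (k : Fin (n + 1)) (j : Fin 4) (β : Fin 4 → ℕ) : Prop :=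
  ∃ σ a, Pending k σ a ∧ Set.EqOn τ ⇑(δ (vC false j k) + δ σ) (controlVars k) ∧
    β = counters τ k + Pi.single j a

/-- The invariant of the program of level `k + 1`, which increments its counter `e * e` times by
means of counters of level `k` with capacity `e = e(k)`. In phase `j` (state `q_{j,k+1}`), with the
counters of level `k` at `β` once the current run of the machine of level `k` has finished, `p`
increments are still to be made. Counters `0` and `3` drive the outer loop, `1` and `2` the
inner one, which only phases `1` and `2` have opened. -/
def Phase (e : ℕ) (j : Fin 4) (β : Fin 4 → ℕ) (p : ℕ) : Prop :=
  p + β 3 * e + β 2 = e * e ∧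
    if j = 0 ∨ j = 3 then β 0 + β 3 = e ∧ β 1 = 0 ∧ β 2 = 0
    else β 0 + β 3 + 1 = e ∧ β 1 + β 2 = e

/-- `τ` is an intermediate configuration of a run of the machine of level `k` for counter `j`, and
`β` are the counters of level `k` at the end of that run. -/
inductive HasTotal (τ : Mon (MVar n)) : Fin (n + 1) → Fin 4 → (Fin 4 → ℕ) → Prop
  | settled {k j β} : Settled τ k j β → HasTotal τ k j β
  | call {k : Fin n} {j j' β' p} :
      Set.EqOn τ ⇑(δ (vC false j k.succ) + δ (vQ false j' k.succ)) (layerVars k.succ) →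
      HasTotal τ k.castSucc j' β' → Phase (en k) j' β' p →
      HasTotal τ k.succ j (counters τ k.succ + Pi.single j p)

/-- The levels up to `k + 1` of `τ` consist of `c_{j,k+1}` and of counters of the levels `k` and
`k + 1`: there is no state, and nothing is left on the lower levels. -/
def Idle (τ : Mon (MVar n)) (k : Fin n) (j : Fin 4) : Prop :=
  Set.EqOn τ ⇑(δ (vC false j k.succ)) (layerVars k.succ) ∧ Set.EqOn τ 0 (controlVars k.castSucc)

@[simp]
theorem mem_controlVars {k : Fin (n + 1)} :
    x ∈ controlVars k ↔ x.level ≤ k ∧ ∀ j, x ≠ vB false j k := Iff.rfl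

@[simp]
theorem mem_layerVars {k : Fin (n + 1)} :
    x ∈ layerVars k ↔ x.level = k ∧ ∀ j, x ≠ vB false j k := Iff.rfl

@[simp]
theorem counters_add (t u : Mon (MVar n)) (k : Fin (n + 1)) :
    counters (t + u) k = counters t k + counters u k := rfl

@[simp]
theorem counters_single_vB (j : Fin 4) (k : Fin (n + 1)) :
    counters (δ (vB false j k)) k = Pi.single j 1 := by
  ext i
  simp [counters, Finsupp.single_apply, Pi.single_apply, eq_comm]

theorem counters_single_of_ne {k : Fin (n + 1)} (hx : ∀ j, x ≠ vB false j k) :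
    counters (δ x) k = 0 := by
  ext i
  simp [counters, (hx i).symm]

theorem eqOn_add_single_iff {a : MVar n → ℕ} (hx : x ∉ S) :
    Set.EqOn ⇑(r + δ x) a S ↔ Set.EqOn r a S := by
  refine forall₂_congr fun y hy => ?_
  rw [Finsupp.add_apply, Finsupp.single_eq_of_ne (by rintro rfl; exact hx hy), add_zero]

theorem eqOn_add_single_add_single_iff {c : Mon (MVar n)} (hx : x ∈ S) (hc : c x = 0) :
    Set.EqOn ⇑(r + δ x) ⇑(c + δ y) S ↔ Set.EqOn r c S ∧ y = x := by
  constructor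
  · intro h
    obtain rfl : y = x := by
      by_contra hne
      have hval := h hx
      simp [hc, hne] at hval
    exact ⟨fun z hz => by simpa using h hz, rfl⟩
  · rintro ⟨h, rfl⟩ z hz
    simp [h hz]

theorem Pending.mem_controlVars {k : Fin (n + 1)} (hσ : Pending k σ a) : σ ∈ controlVars k := by
  cases hσ <;> simp [MVar.level]

theorem Pending.ne_vC {k : Fin (n + 1)} (hσ : Pending k σ a) (j : Fin 4) (l : Fin (n + 1)) :
    σ ≠ vC false j l := by
  cases hσ <;> simp

theorem Pending.unique {k : Fin (n + 1)} (h : Pending k σ a) (h' : Pending k σ b) : a = b := by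
  cases h <;> cases h' <;> rfl

theorem settled_add_single_iff {k : Fin (n + 1)} (hσ : Pending k σ a) :
    Settled (r + δ σ) k j β ↔
      Set.EqOn r ⇑(δ (vC false j k)) (controlVars k) ∧ β = counters r k + Pi.single j a := by
  have heqOn {σ' : MVar n} : Set.EqOn ⇑(r + δ σ) ⇑(δ (vC false j k) + δ σ') (controlVars k) ↔
      Set.EqOn r ⇑(δ (vC false j k)) (controlVars k) ∧ σ' = σ :=
    eqOn_add_single_add_single_iff hσ.mem_controlVars
      (Finsupp.single_eq_of_ne (hσ.ne_vC j k))
  rw [Settled, counters_add, counters_single_of_ne hσ.mem_controlVars.2, add_zero]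
  constructor
  · rintro ⟨σ', b, hσ', h, rfl⟩
    obtain ⟨hr, rfl⟩ := heqOn.1 h
    exact ⟨hr, by rw [hσ.unique hσ']⟩
  · rintro ⟨h, rfl⟩
    exact ⟨σ, a, hσ, heqOn.2 ⟨h, rfl⟩, rfl⟩

theorem settled_add_single_add_single_iff {k : Fin (n + 1)} (hσ : Pending k σ a) :
    Settled (r + δ (vC false i k) + δ σ) k j β ↔
      Set.EqOn r 0 (controlVars k) ∧ j = i ∧ β = counters r k + Pi.single i a := by
  have hC : vC false i k ∈ controlVars k := by simp [MVar.level]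
  rw [settled_add_single_iff hσ, counters_add, counters_single_of_ne hC.2, add_zero,
    ← zero_add (δ (vC false j k)), eqOn_add_single_add_single_iff hC rfl, Finsupp.coe_zero,
    vC.injEq]
  grind

theorem Settled.not_active {k : Fin n} (h : Settled τ k.succ j β) :
    ¬ Active false τ k.castSucc := by
  rintro ⟨i, hi, hτ⟩
  obtain ⟨σ, a, hσ, h, -⟩ := h
  have hik : i < k.succ := hi.trans_lt k.castSucc_lt_succ
  have hne : k.succ ≠ i := hik.ne'
  have hlevel : (i : ℕ) ≤ k + 1 := hik.le
  have hS := h (x := vS false i) (by simpa [MVar.level] using hlevel)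
  have hF := h (x := vF false i) (by simpa [MVar.level] using hlevel)
  cases hσ <;> simp_all

theorem hasTotal_iff_settled {k : Fin (n + 1)} (hσ : Pending k σ a) (hτ : τ σ ≠ 0) :
    HasTotal τ k j β ↔ Settled τ k j β := by
  refine ⟨fun h => ?_, .settled⟩
  cases h with
  | settled h => exact h
  | call h =>
    have := h (x := σ) (by cases hσ <;> simp [MVar.level])
    cases hσ <;> simp at this <;> contradiction

theorem hasTotal_succ_iff_of_active {k : Fin n} (hτ : Active false τ k.castSucc) :
    HasTotal τ k.succ j β ↔ ∃ i β' p,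
      Set.EqOn τ ⇑(δ (vC false j k.succ) + δ (vQ false i k.succ)) (layerVars k.succ) ∧
      HasTotal τ k.castSucc i β' ∧ Phase (en k) i β' p ∧
      β = counters τ k.succ + Pi.single j p := by
  constructor
  · generalize hl : k.succ = l
    rintro (h | @⟨m, j, i, β', p, hlayer, h, hphase⟩)
    · subst hl; exact absurd hτ h.not_active
    · obtain rfl := Fin.succ_inj.1 hl
      exact ⟨i, β', p, hlayer, h, hphase, rfl⟩
  · rintro ⟨i, β', p, hlayer, h, hphase, rfl⟩
    exact .call hlayer h hphase

theorem Pending.active {k l : Fin (n + 1)} (hσ : Pending k σ a) (hkl : k ≤ l) (hτ : τ σ ≠ 0) :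
    Active false τ l := by
  cases hσ
  exacts [⟨k, hkl, .inl hτ⟩, ⟨k, hkl, .inr hτ⟩]

theorem hasTotal_call_iff {k : Fin n} (hσ : Pending k.castSucc σ a) :
    HasTotal (r + δ (vQ false i k.succ) + δ (vC false i k.castSucc) + δ σ) k.succ j β ↔
      Idle r k j ∧ ∃ p, Phase (en k) i (counters r k.castSucc + Pi.single i a) p ∧
        β = counters r k.succ + Pi.single j p := by
  have hτ : (r + δ (vQ false i k.succ) + δ (vC false i k.castSucc) + δ σ) σ ≠ 0 := by simp
  have hlayer {i' : Fin 4} :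
      Set.EqOn ⇑(r + δ (vQ false i k.succ) + δ (vC false i k.castSucc) + δ σ)
        ⇑(δ (vC false j k.succ) + δ (vQ false i' k.succ)) (layerVars k.succ) ↔
      Set.EqOn r ⇑(δ (vC false j k.succ)) (layerVars k.succ) ∧ i' = i := by
    rw [eqOn_add_single_iff (by cases hσ <;> simp [MVar.level]),
      eqOn_add_single_iff (by simp [MVar.level]),
      eqOn_add_single_add_single_iff (by simp [MVar.level]) (by simp)]
    simp only [vQ.injEq, and_true, true_and]
  have hcounters : counters (r + δ (vQ false i k.succ) + δ (vC false i k.castSucc) + δ σ) k.succ =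
      counters r k.succ := by
    simp only [counters_add]
    rw [counters_single_of_ne (by simp), counters_single_of_ne (by simp),
      counters_single_of_ne (by cases hσ <;> simp), add_zero, add_zero, add_zero]
  simp only [hasTotal_succ_iff_of_active (hσ.active le_rfl hτ), hasTotal_iff_settled hσ hτ,
    settled_add_single_add_single_iff hσ, hlayer, hcounters, Idle,
    eqOn_add_single_iff (x := vQ false i k.succ) (S := controlVars k.castSucc)
      (by simp [MVar.level]),
    counters_add, counters_single_of_ne (x := vQ false i k.succ) (k := k.castSucc) (by simp),
    add_zero]
  constructor
  · rintro ⟨_, _, p, ⟨hr, rfl⟩, ⟨hcontrol, -, rfl⟩, hphase, rfl⟩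
    exact ⟨⟨hr, hcontrol⟩, p, hphase, rfl⟩
  · rintro ⟨⟨hr, hcontrol⟩, p, hphase, rfl⟩
    exact ⟨i, _, p, ⟨hr, rfl⟩, ⟨hcontrol, rfl, rfl⟩, hphase, rfl⟩

theorem controlVars_succ (k : Fin n) : controlVars k.succ =
    layerVars k.succ ∪ (controlVars k.castSucc ∪ Set.range fun j => vB false j k.castSucc) := by
  ext x
  have hlower (h : x.level ≤ k) (j : Fin 4) : x ≠ vB false j k.succ := by
    rintro rfl
    simp [MVar.level] at h
  have hcounter : x ∈ Set.range (fun j => vB false j k.castSucc) → x.level ≤ k := by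
    rintro ⟨j, rfl⟩
    simp [MVar.level]
  simp only [Set.mem_union, mem_controlVars, mem_layerVars, Fin.val_succ, Fin.val_castSucc,
    Set.mem_range] at hcounter ⊢
  grind

theorem idle_and_counters_eq_zero_iff {k : Fin n} :
    Idle r k j ∧ counters r k.castSucc = 0 ↔
      Set.EqOn r ⇑(δ (vC false j k.succ)) (controlVars k.succ) := by
  have hzero : Set.EqOn ⇑(δ (vC false j k.succ)) 0
      (controlVars k.castSucc ∪ Set.range fun j => vB false j k.castSucc) := by
    rintro x hx
    refine Finsupp.single_eq_of_ne ?_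
    rintro rfl
    simp [MVar.level] at hx
  have hcounters : counters r k.castSucc = 0 ↔
      Set.EqOn r 0 (Set.range fun j => vB false j k.castSucc) := by
    simp [counters, funext_iff, Set.EqOn]
  rw [controlVars_succ, Set.eqOn_union, hcounters, Idle, and_assoc, ← Set.eqOn_union]
  exact and_congr_right' ⟨fun h => h.trans hzero.symm, fun h => h.trans hzero⟩

theorem hasTotal_state_iff {k : Fin n} (hσ : Pending k.succ σ a) :
    HasTotal (r + δ σ) k.succ j β ↔
      Idle r k j ∧ counters r k.castSucc = 0 ∧ β = counters r k.succ + Pi.single j a := by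
  rw [hasTotal_iff_settled hσ (by simp), settled_add_single_iff hσ,
    ← idle_and_counters_eq_zero_iff, and_assoc]

end Machine

section Simulation

variable {n : ℕ} {r t u τ : Mon (MVar n)} {k : Fin n} {i j : Fin 4} {β : Fin 4 → ℕ}

theorem idle_add_single_vB (l : Fin 4) :
    (Idle (r + δ (vB false l k.castSucc)) k j ↔ Idle r k j) ∧
      (Idle (r + δ (vB false l k.succ)) k j ↔ Idle r k j) := by
  constructor <;> rw [Idle, eqOn_add_single_iff (by simp [MVar.level]),
    eqOn_add_single_iff (by simp [MVar.level]), Idle]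

theorem HasTotal.vC_ne_zero {k : Fin (n + 1)} (h : HasTotal τ k j β) : τ (vC false j k) ≠ 0 := by
  cases h with
  | settled h =>
    obtain ⟨σ, a, -, h, -⟩ := h
    rw [h (by simp [MVar.level])]
    simp
  | call h =>
    rw [h (by simp [MVar.level])]
    simp

theorem HasTotal.vC_castSucc_ne_zero (h : HasTotal τ k.succ j β) (hQ : τ (vQ false i k.succ) ≠ 0)
    (hτ : Active false τ k.castSucc) : τ (vC false i k.castSucc) ≠ 0 := by
  obtain ⟨i', β', p, hlayer, hlower, -, -⟩ := (hasTotal_succ_iff_of_active hτ).1 h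
  obtain rfl : i' = i := by
    by_contra hne
    have hval := hlayer (x := vQ false i k.succ) (by simp [MVar.level])
    simp [hne, hQ] at hval
  exact hlower.vC_ne_zero

theorem en_succ (m : ℕ) : en (m + 1) = en m * en m := by
  rw [en, en, pow_succ, pow_mul, sq]

@[simp]
theorem counters_single_vB_castSucc (i : Fin 4) :
    counters (δ (vB false i k.castSucc)) k.succ = 0 :=
  counters_single_of_ne fun j => by simp [k.castSucc_lt_succ.ne]

@[simp]
theorem counters_single_vB_succ (i : Fin 4) :
    counters (δ (vB false i k.succ)) k.castSucc = 0 :=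
  counters_single_of_ne fun j => by simp [k.castSucc_lt_succ.ne']

section Phase

variable {e p : ℕ}

theorem fin_four_eq_zero_iff : β = 0 ↔ β 0 = 0 ∧ β 1 = 0 ∧ β 2 = 0 ∧ β 3 = 0 := by
  simp [funext_iff, Fin.forall_fin_succ]

theorem phase_start : Phase e 0 (β + Pi.single 0 e) p ↔ β = 0 ∧ p = e * e := by
  rw [fin_four_eq_zero_iff]
  grind [Phase, Pi.add_apply]

theorem phase_fork : Phase e 1 (β + Pi.single 1 e) p ↔ Phase e 0 (β + Pi.single 0 1) p := by
  grind [Phase, Pi.add_apply]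

theorem phase_switch : Phase e 2 β p ↔ Phase e 1 β p := by
  grind [Phase]

theorem phase_loop : Phase e 2 (β + Pi.single 0 1 + Pi.single 2 e) p ↔
    Phase e 1 (β + Pi.single 3 1 + Pi.single 1 e) p := by
  grind [Phase, Pi.add_apply]

theorem phase_join : Phase e 3 (β + Pi.single 3 1) p ↔ Phase e 2 (β + Pi.single 2 e) p := by
  grind [Phase, Pi.add_apply]

theorem phase_finish : Phase e 3 (β + Pi.single 3 e) p ↔ β = 0 ∧ p = 0 := by
  rw [fin_four_eq_zero_iff]
  grind [Phase, Pi.add_apply]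

theorem phase_count :
    Phase e 1 (β + Pi.single 2 1) p ↔ Phase e 1 (β + Pi.single 1 1) (p + 1) := by
  grind [Phase, Pi.add_apply]

theorem not_phase_zero : ¬ Phase e 1 (β + Pi.single 1 1) 0 := by
  intro h
  have hsum : (β 3 * e + β 2 = e * e) ∧ β 0 + β 3 + 1 = e ∧ β 1 + 1 + β 2 = e := by
    grind [Phase, Pi.add_apply]
  nlinarith

end Phase

theorem Idle.eq_of_vC_ne_zero (h : Idle τ k j) (hC : τ (vC false i k.succ) ≠ 0) : i = j := by
  rw [h.1 (by simp [MVar.level]), Finsupp.single_apply_ne_zero, vC.injEq] at hC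
  exact hC.1.2.1

theorem hasTotal_count_iff : HasTotal (r + (δ (vQ false 1 k.succ) + δ (vB false 2 k.castSucc)
      + δ (vB false i k.succ) + δ (vC false i k.succ) + δ (vF false k.castSucc))) k.succ j β ↔
    HasTotal (r + (δ (vQ false 1 k.succ) + δ (vB false 1 k.castSucc)
      + δ (vC false i k.succ) + δ (vF false k.castSucc))) k.succ j β := by
  by_cases hC : r (vC false 1 k.castSucc) = 0
  · refine iff_of_false ?_ ?_ <;> intro h <;>
      simpa [hC, k.castSucc_lt_succ.ne'] using h.vC_castSucc_ne_zero (i := 1) (by simp)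
        (Pending.final.active le_rfl (by simp))
  obtain ⟨r, rfl⟩ := exists_add_of_le (Finsupp.single_le_iff.2 (Nat.one_le_iff_ne_zero.2 hC))
  rw [show δ (vC false 1 k.castSucc) + r + (δ (vQ false 1 k.succ) + δ (vB false 2 k.castSucc)
        + δ (vB false i k.succ) + δ (vC false i k.succ) + δ (vF false k.castSucc)) =
      r + δ (vC false i k.succ) + δ (vB false 2 k.castSucc) + δ (vB false i k.succ)
        + δ (vQ false 1 k.succ) + δ (vC false 1 k.castSucc) + δ (vF false k.castSucc) by abel,
    show δ (vC false 1 k.castSucc) + r + (δ (vQ false 1 k.succ) + δ (vB false 1 k.castSucc)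
        + δ (vC false i k.succ) + δ (vF false k.castSucc)) =
      r + δ (vC false i k.succ) + δ (vB false 1 k.castSucc)
        + δ (vQ false 1 k.succ) + δ (vC false 1 k.castSucc) + δ (vF false k.castSucc) by abel,
    hasTotal_call_iff .final, hasTotal_call_iff .final]
  have hrC : (r + δ (vC false i k.succ)) (vC false i k.succ) ≠ 0 := by simp
  generalize r + δ (vC false i k.succ) = r at hrC ⊢
  simp only [idle_add_single_vB, counters_add _ (δ _), counters_single_vB,
    counters_single_vB_castSucc, counters_single_vB_succ, Pi.single_zero, add_zero]
  refine and_congr_right fun hidle => ?_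
  obtain rfl : i = j := hidle.eq_of_vC_ne_zero hrC
  constructor
  · rintro ⟨p, hphase, rfl⟩
    exact ⟨p + 1, phase_count.1 hphase, by rw [add_assoc, ← Pi.single_add, add_comm 1]⟩
  · rintro ⟨_ | p, hphase, rfl⟩
    · exact absurd hphase not_phase_zero
    · exact ⟨p, phase_count.2 hphase, by rw [add_assoc, ← Pi.single_add, add_comm 1]⟩

theorem CounterRule.hasTotal_iff {k : Fin (n + 1)} (h : CounterRule false k t u)
    (r : Mon (MVar n)) (j : Fin 4) (β : Fin 4 → ℕ) :
    HasTotal (r + t) k j β ↔ HasTotal (r + u) k j β := by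
  cases h with
  | base i =>
    have hB : vB false i 0 ∉ controlVars (0 : Fin (n + 1)) := by simp
    simp only [← add_assoc, two_nsmul]
    rw [hasTotal_iff_settled .final (by simp), hasTotal_iff_settled .start (by simp),
      settled_add_single_add_single_iff .final, settled_add_single_add_single_iff .start,
      eqOn_add_single_iff hB, eqOn_add_single_iff hB, counters_add, counters_add,
      counters_single_vB, add_assoc (counters r 0), ← Pi.single_add, Pi.single_zero, add_zero]
    rfl
  | start k =>
    simp only [← add_assoc, hasTotal_call_iff .start, hasTotal_state_iff .start, Fin.val_castSucc,
      phase_start, Fin.val_succ, en_succ]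
    simp
  | finish k =>
    simp only [← add_assoc, hasTotal_call_iff .start, hasTotal_state_iff .final, Fin.val_castSucc,
      phase_finish]
    simp
  | fork k =>
    simp only [← add_assoc, add_right_comm r (δ (vQ false 0 k.succ)), hasTotal_call_iff .start,
      hasTotal_call_iff .final, idle_add_single_vB, Fin.val_castSucc, counters_add,
      counters_single_vB, counters_single_vB_castSucc, Pi.single_zero, add_zero, phase_fork]
  | switch k =>
    simp only [← add_assoc, hasTotal_call_iff .final, Pi.single_zero, add_zero, phase_switch]
  | loop k =>
    simp only [← add_assoc, add_right_comm r (δ (vQ false _ k.succ)), hasTotal_call_iff .start,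
      idle_add_single_vB, Fin.val_castSucc, counters_add,
      counters_single_vB, counters_single_vB_castSucc, add_zero, phase_loop]
  | join k =>
    simp only [← add_assoc, add_right_comm r (δ (vQ false 3 k.succ)), hasTotal_call_iff .start,
      hasTotal_call_iff .final, idle_add_single_vB, Fin.val_castSucc, counters_add,
      counters_single_vB, counters_single_vB_castSucc, Pi.single_zero, add_zero, phase_join]
  | count k i =>
    exact hasTotal_count_iff

/-- `τ` and `τ'` differ in the levels up to `k` only, where both of them are intermediate
configurations of the same runs of the machine of level `k`. -/
structure SameRuns (τ τ' : Mon (MVar n)) (k : Fin (n + 1)) : Prop where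
  active_left : Active false τ k
  active_right : Active false τ' k
  eq_of_lt_level ⦃x : MVar n⦄ : (k : ℕ) < x.level → τ x = τ' x
  hasTotal_iff (j : Fin 4) (β : Fin 4 → ℕ) : HasTotal τ k j β ↔ HasTotal τ' k j β

theorem CounterRule.sameRuns {k : Fin (n + 1)} (h : CounterRule false k t u) (r : Mon (MVar n)) :
    SameRuns (r + t) (r + u) k where
  active_left := h.active.1.add_left r
  active_right := h.active.2.add_left r
  eq_of_lt_level x hx := by
    rw [Finsupp.add_apply, Finsupp.add_apply, (h.eq_zero_of_lt_level hx).1,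
      (h.eq_zero_of_lt_level hx).2]
  hasTotal_iff := h.hasTotal_iff r

theorem SameRuns.succ {τ' : Mon (MVar n)} (h : SameRuns τ τ' k.castSucc) :
    SameRuns τ τ' k.succ where
  active_left := h.active_left.mono k.castSucc_le_succ
  active_right := h.active_right.mono k.castSucc_le_succ
  eq_of_lt_level x hx := h.eq_of_lt_level ((Nat.lt_succ_self _).trans hx)
  hasTotal_iff j β := by
    have hlayer : Set.EqOn τ τ' (layerVars k.succ) := fun x hx =>
      h.eq_of_lt_level (by simp [hx.1])
    have hcounters : counters τ k.succ = counters τ' k.succ :=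
      funext fun i => h.eq_of_lt_level (by simp [MVar.level])
    have heqOn (c : MVar n → ℕ) :
        Set.EqOn τ c (layerVars k.succ) ↔ Set.EqOn τ' c (layerVars k.succ) :=
      ⟨hlayer.symm.trans, hlayer.trans⟩
    simp only [hasTotal_succ_iff_of_active h.active_left,
      hasTotal_succ_iff_of_active h.active_right, h.hasTotal_iff, hcounters, heqOn]

theorem SameRuns.last {k : Fin (n + 1)} {τ' : Mon (MVar n)} (h : SameRuns τ τ' k) :
    SameRuns τ τ' (Fin.last n) := by
  suffices ∀ l, k ≤ l → SameRuns τ τ' l from this _ k.le_last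
  intro l
  induction l using Fin.induction with
  | zero => rintro hk; rwa [← Fin.le_zero_iff.1 hk]
  | succ l ih =>
    intro hk
    rcases hk.eq_or_lt with rfl | hk
    · exact h
    · exact (ih (Fin.le_castSucc_iff.2 hk)).succ

end Simulation

section Transfer

variable {n m₁ m₂ : ℕ} {r t u τ τ' : Mon (MVar n)}

/-- A set of monomials which contains `ℓ c̄ ^ m₁ c ^ m₂` and, for `m₁ + m₂ < e(n)`, is closed
under the rules of `𝓕`: some of the factors `c` and `c̄` have become `b` and `b̄`, each of these
adding one to `b_{4n}`, and then the machine of level `n` may have run backwards from its final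
state. -/
def transferClass (n m₁ m₂ : ℕ) : Set (Mon (MVar n)) :=
  {τ | ¬ Active true τ (Fin.last n) ∧ τ vs = 0 ∧ τ vc + τ vb = m₂ ∧ τ vcb + τ vbb = m₁ ∧
    (τ vl = 1 ∧ Set.EqOn τ 0 (controlVars (Fin.last n)) ∧
        counters τ (Fin.last n) = Pi.single 3 (τ vb + τ vbb) ∨
      τ vl = 0 ∧ HasTotal τ (Fin.last n) 3 (Pi.single 3 (τ vb + τ vbb)))}

theorem Active.not_eqOn_zero (h : Active false τ (Fin.last n)) :
    ¬ Set.EqOn τ 0 (controlVars (Fin.last n)) := by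
  intro hzero
  obtain ⟨i, -, hτ⟩ := h
  have hin := i.is_le
  rw [hzero (by simpa [MVar.level]), hzero (by simpa [MVar.level])] at hτ
  simp at hτ

theorem SameRuns.mem_transferClass_iff (h : SameRuns τ τ' (Fin.last n)) :
    τ ∈ transferClass n m₁ m₂ ↔ τ' ∈ transferClass n m₁ m₂ := by
  have heq {x : MVar n} (hx : x.level = n + 1) : τ x = τ' x := h.eq_of_lt_level (by simp [hx])
  have hactive : Active true τ (Fin.last n) ↔ Active true τ' (Fin.last n) := by
    simp only [Active, heq (x := vS true _) rfl, heq (x := vF true _) rfl]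
  simp only [transferClass, Set.mem_ofPred_eq, hactive, heq (x := vs) rfl, heq (x := vc) rfl,
    heq (x := vb) rfl, heq (x := vcb) rfl, heq (x := vbb) rfl, heq (x := vl) rfl,
    h.active_left.not_eqOn_zero, h.active_right.not_eqOn_zero, h.hasTotal_iff, false_and]

theorem CounterRule.mem_transferClass_iff {bar : Bool} {k : Fin (n + 1)}
    (h : CounterRule bar k t u) (r : Mon (MVar n)) :
    r + t ∈ transferClass n m₁ m₂ ↔ r + u ∈ transferClass n m₁ m₂ := by
  cases bar with
  | false => exact (h.sameRuns r).last.mem_transferClass_iff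
  | true =>
    exact iff_of_false (fun hr => hr.1 ((h.active.1.add_left r).mono k.le_last))
      fun hr => hr.1 ((h.active.2.add_left r).mono k.le_last)

theorem vS_last_eq_zero_of_mem_transferClass (hm : m₁ + m₂ < en n)
    (hτ : τ ∈ transferClass n m₁ m₂) : τ (vS false (Fin.last n)) = 0 := by
  by_contra hS
  obtain ⟨-, -, hc, hcb, ⟨-, hzero, -⟩ | ⟨-, htotal⟩⟩ := hτ
  · exact (Pending.start.active le_rfl hS).not_eqOn_zero hzero
  · obtain ⟨r, rfl⟩ := exists_add_of_le (Finsupp.single_le_iff.2 (Nat.one_le_iff_ne_zero.2 hS))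
    rw [add_comm, hasTotal_iff_settled .start (by simp), settled_add_single_iff .start] at htotal
    have hval := congrFun htotal.2 3
    simp only [Pi.single_eq_same, Pi.add_apply, Fin.val_last] at hval
    simp only [Finsupp.coe_add, Pi.add_apply, ne_eq, reduceCtorEq, not_false_eq_true,
      Finsupp.single_eq_of_ne, zero_add, add_zero] at hc hcb hval
    lia

theorem eqOn_controlVars_add_single_iff {x : MVar n} (hx : x.level = n + 1) :
    Set.EqOn ⇑(r + δ x) 0 (controlVars (Fin.last n)) ↔
      Set.EqOn r 0 (controlVars (Fin.last n)) :=
  eqOn_add_single_iff (by simp [hx])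

theorem counters_add_single {x : MVar n} (hx : x.level = n + 1) :
    counters (r + δ x) (Fin.last n) = counters r (Fin.last n) := by
  rw [counters_add, counters_single_of_ne, add_zero]
  rintro j rfl
  simp [MVar.level] at hx

theorem add_single_vl_mem_transferClass_iff : r + δ vl ∈ transferClass n m₁ m₂ ↔
    ¬ Active true r (Fin.last n) ∧ r vs = 0 ∧ r vc + r vb = m₂ ∧ r vcb + r vbb = m₁ ∧ r vl = 0 ∧
      Set.EqOn r 0 (controlVars (Fin.last n)) ∧
      counters r (Fin.last n) = Pi.single 3 (r vb + r vbb) := by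
  rw [transferClass, Set.mem_ofPred_eq, eqOn_controlVars_add_single_iff rfl,
    counters_add_single rfl]
  simp [Active]

theorem add_final_mem_transferClass_iff :
    r + (δ (vC false 3 (Fin.last n)) + δ (vF false (Fin.last n))) ∈ transferClass n m₁ m₂ ↔
      r + δ vl ∈ transferClass n m₁ m₂ := by
  have hF : (r + δ (vC false 3 (Fin.last n)) + δ (vF false (Fin.last n))) (vF false (Fin.last n))
    ≠ 0 := by simp
  rw [← add_assoc, add_single_vl_mem_transferClass_iff]
  simp only [transferClass, Set.mem_ofPred_eq, (Pending.final.active le_rfl hF).not_eqOn_zero,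
    hasTotal_iff_settled .final hF, settled_add_single_add_single_iff .final]
  simp [Active, eq_comm]

theorem LinkRule.mem_transferClass_iff (hm : m₁ + m₂ < en n) (h : LinkRule t u)
    (r : Mon (MVar n)) : r + t ∈ transferClass n m₁ m₂ ↔ r + u ∈ transferClass n m₁ m₂ := by
  have hunload (a : ℕ) : counters r (Fin.last n) + Pi.single 3 1 = Pi.single 3 (a + 1) ↔
      counters r (Fin.last n) = Pi.single 3 a := by rw [Pi.single_add, add_left_inj]
  have hB : vB false 3 (Fin.last n) ∉ controlVars (Fin.last n) := by simp
  cases h with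
  | unload_c =>
    rw [← add_assoc, ← add_assoc, ← add_assoc, add_right_comm _ (δ vl) (δ vb),
      add_right_comm _ (δ vl) (δ vc), add_single_vl_mem_transferClass_iff,
      add_single_vl_mem_transferClass_iff, eqOn_controlVars_add_single_iff (x := vb) rfl,
      eqOn_controlVars_add_single_iff (x := vc) rfl, eqOn_add_single_iff hB,
      counters_add_single (x := vb) rfl, counters_add_single (x := vc) rfl, counters_add,
      counters_single_vB]
    simp [Active, add_right_comm _ 1, hunload, ← add_assoc]
  | finish => exact add_final_mem_transferClass_iff
  | handover =>
    refine iff_of_false (fun hr => hr.1 (.add_left ?_ r)) fun hr => ?_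
    · exact ⟨_, le_rfl, by simp⟩
    · simpa using vS_last_eq_zero_of_mem_transferClass hm hr
  | start =>
    refine iff_of_false (fun hr => hr.1 (.add_left ?_ r)) fun hr => ?_
    · exact ⟨_, le_rfl, by simp⟩
    · simpa using hr.2.1
  | load_b | load_bb =>
    refine iff_of_false ?_ ?_ <;> intro hr <;>
      simpa using vS_last_eq_zero_of_mem_transferClass hm hr
  | unload_cb =>
    rw [← add_assoc, ← add_assoc, ← add_assoc, add_right_comm _ (δ vl) (δ vbb),
      add_right_comm _ (δ vl) (δ vcb), add_single_vl_mem_transferClass_iff,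
      add_single_vl_mem_transferClass_iff, eqOn_controlVars_add_single_iff (x := vbb) rfl,
      eqOn_controlVars_add_single_iff (x := vcb) rfl, eqOn_add_single_iff hB,
      counters_add_single (x := vbb) rfl, counters_add_single (x := vcb) rfl, counters_add,
      counters_single_vB]
    simp [Active, add_right_comm _ 1, hunload, ← add_assoc]

theorem single_vl_add_mem_transferClass :
    δ vl + Finsupp.single vcb m₁ + Finsupp.single vc m₂ ∈ transferClass n m₁ m₂ := by
  rw [add_assoc, add_comm, add_single_vl_mem_transferClass_iff]
  refine ⟨by simp [Active], by simp, by simp, by simp, by simp, fun x hx => ?_, ?_⟩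
  · have hne (y : MVar n) (hy : y.level = n + 1) : y ≠ x := by
      rintro rfl
      exact absurd hx (by simp [hy])
    simp [Finsupp.single_eq_of_ne' (hne vcb rfl), Finsupp.single_eq_of_ne' (hne vc rfl)]
  · ext j
    simp [counters]

theorem eq_of_mem_transferClass_of_lexLe (hu : u ∈ transferClass n m₁ m₂)
    (h : lexLe n u (δ vl + Finsupp.single vcb m₁ + Finsupp.single vc m₂)) :
    u = δ vl + Finsupp.single vcb m₁ + Finsupp.single vc m₂ := by
  refine h.resolve_right ?_
  rintro ⟨x, hlt, heq⟩
  have hx : x = vl ∨ x = vcb ∨ x = vc := by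
    by_contra! hx
    simp [Finsupp.single_eq_of_ne hx.1, Finsupp.single_eq_of_ne hx.2.1,
      Finsupp.single_eq_of_ne hx.2.2] at hlt
  have hrank : vrank n x ≤ vrank n vl := by rcases hx with rfl | rfl | rfl <;> simp [vrank]
  have hzero {y : MVar n} (hy : vrank n vl < vrank n y) : u y = 0 := by
    rw [heq y (hrank.trans_lt hy)]
    cases y <;> simp [vrank] at hy ⊢
  obtain ⟨-, -, hc, hcb, ⟨hl, -, -⟩ | ⟨-, htotal⟩⟩ := hu
  · rw [hzero (y := vb) (by simp [vrank]), add_zero] at hc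
    rw [hzero (y := vbb) (by simp [vrank]), add_zero] at hcb
    rcases hx with rfl | rfl | rfl <;> simp [hl, hc, hcb] at hlt
  · exact htotal.vC_ne_zero (hzero (by simp [vrank]; lia))

end Transfer

section Stateless

variable {n : ℕ} {bar : Bool} {k : Fin (n + 1)} {g r t u : Mon (MVar n)}

/-- No variable of the form `s`, `ℓ`, `s_i`, `f_i`, `s̄_i`, `f̄_i` divides `τ`; hence neither does
any monomial of a binomial of `𝓕`. -/
def Stateless (τ : Mon (MVar n)) : Prop :=
  τ vs = 0 ∧ τ vl = 0 ∧ ∀ bar i, τ (vS bar i) = 0 ∧ τ (vF bar i) = 0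

theorem Stateless.of_add (h : Stateless (r + t)) : Stateless t := by
  simp_all [Stateless]

theorem Active.not_stateless (h : Active bar t k) : ¬ Stateless t := by
  obtain ⟨i, -, ht⟩ := h
  rintro ⟨-, -, hstate⟩
  exact ht.elim (· (hstate bar i).1) (· (hstate bar i).2)

theorem LinkRule.not_stateless (h : LinkRule t u) : ¬ Stateless t ∧ ¬ Stateless u := by
  cases h <;> constructor <;> rintro ⟨hs, hl, hstate⟩ <;>
    have hfalse := hstate false (Fin.last n) <;> have htrue := hstate true (Fin.last n) <;>
    simp at hs hl hfalse htrue

theorem Stateless.saturated_singleton (hg : Stateless g) : Saturated (FF n) {g} := by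
  have hiff {t u : Mon (MVar n)} (ht : ¬ Stateless t) (hu : ¬ Stateless u) (r : Mon (MVar n)) :
      r + t ∈ ({g} : Set (Mon (MVar n))) ↔ r + u ∈ ({g} : Set (Mon (MVar n))) :=
    iff_of_false (by rintro rfl; exact ht hg.of_add) (by rintro rfl; exact hu hg.of_add)
  exact saturated_FF (fun _ _ _ _ h => hiff h.active.1.not_stateless h.active.2.not_stateless)
    fun _ _ h => hiff h.not_stateless.1 h.not_stateless.2

end Stateless

/-- For every `g ∈ D` and every polynomial `f` with `g + f ∈ ⟨𝓕⟩`, one has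
`g ≼_lex f` (the lexicographic order extended to polynomials). -/
theorem stmt15 (n : ℕ) (g : Mon (MVar n)) (hg : g ∈ Dmon n) (f : MPoly n)
    (h : (monomial g 1 : MPoly n) + f ∈ Ideal.span (FF n)) :
    polyLe (lexLe n) (monomial g 1) f := by
  obtain ⟨j, m₁, m₂, hj, hm, rfl⟩ := hg
  obtain rfl | rfl : j = 0 ∨ j = 1 := by lia
  · have hstateless : Stateless (Finsupp.single vl 0 + Finsupp.single vcb m₁ +
        Finsupp.single vc m₂ : Mon (MVar n)) := by simp [Stateless]
    exact hstateless.saturated_singleton.polyLe_monomial exists_lexLe_max rfl (fun _ hu _ => hu) h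
  · have hsat : Saturated (FF n) (transferClass n m₁ m₂) :=
      saturated_FF (fun _ _ _ _ hrule => hrule.mem_transferClass_iff)
        fun _ _ hrule => hrule.mem_transferClass_iff (by lia)
    exact hsat.polyLe_monomial exists_lexLe_max single_vl_add_mem_transferClass
      (fun _ => eq_of_mem_transferClass_of_lexLe) h
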